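/- Barrier (bootstrap) lemma for the integral inequality controlling ‖E − I‖: let A > 0, let ε ∈ (0,1], and let T ≥ 0 satisfy 4·A·T ≤ ε. Suppose y : [0,T] → ℝ is continuous, nonnegative, and satisfies y(t) ≤ A·∫₀ᵗ (y(s)² + 1) ds for all t ∈ [0,T]. Then y(t) ≤ ε for all t ∈ [0,T]. -/

import Mathlib

open intervalIntegral

/-- Barrier (bootstrap) lemma for the integral inequality controlling `‖E − I‖`. -/
theorem barrier_lemma (A ε T : ℝ) (hA : 0 < A) (hε : ε ∈ Set.Ioc (0 : ℝ) 1)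
    (hT : 0 ≤ T) (hTε : 4 * A * T ≤ ε)
    (y : ℝ → ℝ) (hy : ContinuousOn y (Set.Icc 0 T))
    (hy0 : ∀ t ∈ Set.Icc 0 T, 0 ≤ y t)
    (hineq : ∀ t ∈ Set.Icc 0 T, y t ≤ A * ∫ s in (0 : ℝ)..t, (y s ^ 2 + 1)) :
    ∀ t ∈ Set.Icc 0 T, y t ≤ ε := by
  obtain ⟨hε0, hε1⟩ := hε
  intro t ht
  by_contra! hlt
  have hsub : Set.Icc 0 t ⊆ Set.Icc 0 T := Set.Icc_subset_Icc_right ht.2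
  have hcl : IsClosed (Set.Icc 0 t ∩ y ⁻¹' Set.Ici ε) :=
    (hy.mono hsub).preimage_isClosed_of_isClosed isClosed_Icc isClosed_Ici
  have hcpt : IsCompact (Set.Icc 0 t ∩ y ⁻¹' Set.Ici ε) :=
    isCompact_Icc.of_isClosed_subset hcl Set.inter_subset_left
  -- the first time at which `y` reaches `ε`
  obtain ⟨a, ⟨ha, hya⟩, hmin⟩ := hcpt.exists_isLeast ⟨t, ⟨ht.1, le_rfl⟩, hlt.le⟩
  have hbelow : ∀ s ∈ Set.Ioo 0 a, y s ^ 2 + 1 ≤ 2 := by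
    intro s hs
    have h1 : y s < ε := by
      by_contra! h
      exact absurd (hmin ⟨⟨hs.1.le, hs.2.le.trans ha.2⟩, h⟩) (not_le.mpr hs.2)
    have h0 : 0 ≤ y s := hy0 s ⟨hs.1.le, hs.2.le.trans (ha.2.trans ht.2)⟩
    nlinarith
  have hcont : ContinuousOn (fun s => y s ^ 2 + 1) (Set.uIcc 0 a) := by
    rw [Set.uIcc_of_le ha.1]
    exact ((hy.mono (Set.Icc_subset_Icc_right (ha.2.trans ht.2))).pow 2).add continuousOn_const
  have hint : ∫ s in (0 : ℝ)..a, (y s ^ 2 + 1) ≤ ∫ _s in (0 : ℝ)..a, (2 : ℝ) :=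
    integral_mono_on_of_le_Ioo ha.1 hcont.intervalIntegrable (by simp) hbelow
  rw [integral_const, smul_eq_mul, sub_zero] at hint
  have h1 := hineq a (hsub ha)
  have h2 := mul_le_mul_of_nonneg_left hint hA.le
  have h3 := mul_le_mul_of_nonneg_left (ha.2.trans ht.2) hA.le
  have h4 : ε ≤ y a := hya
  nlinarith
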